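/- Let G = (V,E) be a finite simple graph with n vertices and m edges having a dominating clique K of order 4. If m ≥ 3(n−4) + 4, then G is 3-antimagic. -/

import Mathlib

open Finset

/-- A finite simple graph `G` with `m` edges is *`C`-antimagic* if there is an injective
labelling of its edges by labels in `{1, 2, …, m + C}` such that the vertex sums
`σ(u) = ∑_{v : uv ∈ E} f(uv)` are pairwise distinct. -/
def IsCAntimagic {V : Type*} [Fintype V] [DecidableEq V] (G : SimpleGraph V)
    [DecidableRel G.Adj] (C : ℕ) : Prop :=
  ∃ f : Sym2 V → ℕ,
    Set.InjOn f ↑G.edgeFinset ∧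
    (∀ e ∈ G.edgeFinset, f e ∈ Finset.Icc 1 (G.edgeFinset.card + C)) ∧
    Function.Injective fun u : V => ∑ v ∈ G.neighborFinset u, f s(u, v)

/-!
Split the edges into the six edges inside `K`, one spoke from each vertex outside `K` to `K`, and
the rest. The clique receives labels in `[1, 9]`, the spokes receive `10, 13, 16, …`, and the
remaining edges receive the other labels from `10` on, in any order. Handing out the spoke labels in
the order of the sums already present makes the vertex sums outside `K` pairwise differ by at
least `3`, so any three consecutive integers contain at most one of them.

List the vertices of `K` by increasing partial sum. In a `K₄` on `0, 1, 2, 3`, raising the label of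
`02` moves the sums at `0` and `2`, while raising that of the opposite edge `13` moves those at `1`
and `3`; three values of each shift leave one that avoids the forbidden value at both ends. So the
sums in `K` can be kept increasing and away from all sums outside `K`.
-/

section Labelling

variable {α β : Type*} {f g : α → β} {s t : Finset α} {A B : Finset β}

/-- `f` labels the elements of `s` by distinct elements of `A`. -/
structure IsLabelling (f : α → β) (s : Finset α) (A : Finset β) : Prop where
  injOn : Set.InjOn f s
  mapsTo : Set.MapsTo f s A

theorem exists_isLabelling_of_card_le [Nonempty β] (h : #s ≤ #A) :
    ∃ f : α → β, IsLabelling f s A := by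
  obtain ⟨f, hmaps, hinj⟩ := s.finite_toSet.exists_injOn_of_encard_le (t := (A : Set β))
    (by simpa only [Set.encard_coe_eq_coe_finsetCard, Nat.cast_le] using h)
  exact ⟨f, hinj, hmaps⟩

theorem IsLabelling.mono (hf : IsLabelling f s A) (hAB : A ⊆ B) : IsLabelling f s B :=
  ⟨hf.injOn, hf.mapsTo.mono_right (coe_subset.2 hAB)⟩

theorem IsLabelling.piecewise_of_subset [DecidableEq α] [DecidableEq β] (hf : IsLabelling f s A)
    (hg : IsLabelling g (t \ s) B) (hst : s ⊆ t) (hAB : Disjoint A B) :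
    IsLabelling (s.piecewise f g) t (A ∪ B) := by
  have hs : Set.EqOn f (s.piecewise f g) s := fun e he => (piecewise_eq_of_mem _ _ _ he).symm
  have hts : Set.EqOn g (s.piecewise f g) ↑(t \ s) := fun e he =>
    (piecewise_eq_of_notMem _ _ _ (mem_sdiff.1 he).2).symm
  rw [← union_sdiff_of_subset hst]
  constructor
  · rw [coe_union, Set.injOn_union (disjoint_coe.2 disjoint_sdiff)]
    refine ⟨hf.injOn.congr hs, hg.injOn.congr hts, fun e he e' he' hee' => ?_⟩
    rw [← hs he, ← hts he'] at hee'
    exact disjoint_left.1 hAB (hf.mapsTo he) (hee' ▸ hg.mapsTo he')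
  · rw [coe_union, coe_union]
    exact (hf.mapsTo.congr hs).union_union (hg.mapsTo.congr hts)

theorem IsLabelling.comp_of_image {γ : Type*} [DecidableEq α] {s : Finset γ} {r : γ → α}
    (hf : IsLabelling f (s.image r) A) (hr : Set.InjOn r s) : IsLabelling (f ∘ r) s A := by
  have hmaps : Set.MapsTo r s (s.image r) := fun _ he => mem_image_of_mem r he
  exact ⟨hf.injOn.comp hr hmaps, hf.mapsTo.comp hmaps⟩

end Labelling

section Rank

variable {V α : Type*} [LinearOrder α]

theorem exists_rank_of_finset (T : Finset V) (w : V → α) :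
    ∃ r : V → ℕ, Set.InjOn r T ∧ T.image r = range #T ∧
      ∀ u ∈ T, ∀ v ∈ T, r u < r v → w u ≤ w v := by
  let enum : Fin #T ≃ T := (Tuple.sort fun i => w (T.equivFin.symm i)).trans T.equivFin.symm
  have hmono : Monotone fun i => w (enum i) :=
    Tuple.monotone_sort fun i => w (T.equivFin.symm i)
  classical
  let r : V → ℕ := fun v => if hv : v ∈ T then enum.symm ⟨v, hv⟩ else 0
  have hr : ∀ v (hv : v ∈ T), r v = enum.symm ⟨v, hv⟩ := fun v hv => dif_pos hv
  refine ⟨r, fun u hu v hv huv => ?_, ?_, fun u hu v hv huv => ?_⟩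
  · rw [hr u hu, hr v hv, Fin.val_inj, enum.symm.injective.eq_iff] at huv
    exact congrArg Subtype.val huv
  · ext i
    simp only [mem_image, mem_range]
    constructor
    · rintro ⟨v, hv, rfl⟩
      exact hr v hv ▸ (enum.symm ⟨v, hv⟩).isLt
    · intro hi
      exact ⟨enum ⟨i, hi⟩, (enum ⟨i, hi⟩).2, by simp [hr]⟩
  · rw [hr u hu, hr v hv] at huv
    simpa only [Equiv.apply_symm_apply] using hmono (Fin.lt_def.2 huv).le

end Rank

section Spaced

variable {V : Type*} {d : ℕ} {σ : V → ℕ} {T : Finset V}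

/-- The values of `σ` at distinct points of `T` differ by at least `d`. Stated without subtraction,
which truncates on `ℕ`. -/
def IsSpaced (d : ℕ) (σ : V → ℕ) (T : Finset V) : Prop :=
  (T : Set V).Pairwise fun u v => σ u + d ≤ σ v ∨ σ v + d ≤ σ u

theorem IsSpaced.injOn [NeZero d] (h : IsSpaced d σ T) : Set.InjOn σ T := by
  intro u hu v hv huv
  by_contra hne
  have := h hu hv hne
  have := NeZero.pos d
  omega

theorem IsSpaced.exists_fin_forall_ne_add [NeZero d] (h : IsSpaced d σ T) (x : ℕ) :
    ∃ c : Fin d, ∀ j ≠ c, ∀ v ∈ T, σ v ≠ x + j := by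
  by_cases hhit : ∃ c : Fin d, ∃ u ∈ T, σ u = x + c
  · obtain ⟨c, u, hu, hc⟩ := hhit
    refine ⟨c, fun j hj v hv hvj => ?_⟩
    have huv : u ≠ v := by
      rintro rfl
      exact hj (Fin.ext (by omega))
    have := h hu hv huv
    omega
  · push Not at hhit
    exact ⟨0, fun j _ => hhit j⟩

end Spaced

section VertexSum

variable {V : Type*} [DecidableEq V] {E F : Finset (Sym2 V)} {f g : Sym2 V → ℕ}

/-- The sum of the labels `f e` over the edges `e ∈ E` incident with `u`. -/
def vertexSum (E : Finset (Sym2 V)) (f : Sym2 V → ℕ) (u : V) : ℕ :=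
  ∑ e ∈ E with u ∈ e, f e

theorem sum_neighborFinset_eq_vertexSum [Fintype V] (G : SimpleGraph V) [DecidableRel G.Adj]
    (f : Sym2 V → ℕ) (u : V) :
    ∑ v ∈ G.neighborFinset u, f s(u, v) = vertexSum G.edgeFinset f u := by
  have himage : {e ∈ G.edgeFinset | u ∈ e} = (G.neighborFinset u).image fun v => s(u, v) := by
    ext e
    simp only [mem_filter, mem_image, SimpleGraph.mem_edgeFinset, SimpleGraph.mem_neighborFinset]
    constructor
    · rintro ⟨he, v, rfl⟩
      exact ⟨v, he, rfl⟩
    · rintro ⟨v, huv, rfl⟩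
      exact ⟨huv, Sym2.mem_mk_left u v⟩
  rw [vertexSum, himage, sum_image fun _ _ _ _ => Sym2.congr_right.1]

theorem vertexSum_piecewise_of_subset (hEF : E ⊆ F) (u : V) :
    vertexSum F (E.piecewise f g) u = vertexSum E f u + vertexSum (F \ E) g u := by
  have hsplit : {e ∈ F | u ∈ e} = {e ∈ E | u ∈ e} ∪ {e ∈ F \ E | u ∈ e} := by
    rw [← filter_union, union_sdiff_of_subset hEF]
  rw [vertexSum, hsplit, sum_union (disjoint_filter_filter disjoint_sdiff)]
  congr 1
  · exact sum_congr rfl fun e he => piecewise_eq_of_mem _ _ _ (mem_filter.1 he).1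
  · exact sum_congr rfl fun e he =>
      piecewise_eq_of_notMem _ _ _ (mem_sdiff.1 (mem_filter.1 he).1).2

end VertexSum

section Sym2Map

variable {V W : Type*} {K : Finset V} {r : V → W}

theorem mem_sym2_map_iff (hr : Set.InjOn r K) {e : Sym2 V} {u : V} (he : e ∈ K.sym2)
    (hu : u ∈ K) : r u ∈ Sym2.map r e ↔ u ∈ e := by
  rw [Sym2.mem_map]
  constructor
  · rintro ⟨v, hv, hvu⟩
    exact hr (mem_sym2_iff.1 he v hv) hu hvu ▸ hv
  · exact fun hue => ⟨u, hue, rfl⟩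

theorem injOn_sym2_map (hr : Set.InjOn r K) : Set.InjOn (Sym2.map r) K.sym2 := by
  have hle : ∀ e ∈ K.sym2, ∀ e' ∈ K.sym2, Sym2.map r e = Sym2.map r e' → ∀ u ∈ e, u ∈ e' := by
    intro e he e' he' hee' u hue
    have hu : u ∈ K := mem_sym2_iff.1 he u hue
    exact (mem_sym2_map_iff hr he' hu).1 (hee' ▸ (mem_sym2_map_iff hr he hu).2 hue)
  exact fun e he e' he' hee' =>
    Sym2.ext fun u => ⟨hle e he e' he' hee' u, hle e' he' e he hee'.symm u⟩

theorem vertexSum_image_map [DecidableEq V] [DecidableEq W] (hr : Set.InjOn r K)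
    (f : Sym2 W → ℕ) {E : Finset (Sym2 V)} (hE : E ⊆ K.sym2) {u : V} (hu : u ∈ K) :
    vertexSum (E.image (Sym2.map r)) f (r u) = vertexSum E (f ∘ Sym2.map r) u := by
  rw [vertexSum, vertexSum, filter_image, filter_congr fun e he => mem_sym2_map_iff hr (hE he) hu,
    sum_image ((injOn_sym2_map hr).mono fun e he => hE (mem_filter.1 he).1)]
  rfl

end Sym2Map

section CliqueEdges

variable {V W : Type*} [DecidableEq V] [DecidableEq W] {K : Finset V}

/-- The edges of the complete graph on `K`. -/
def cliqueEdges (K : Finset V) : Finset (Sym2 V) :=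
  {e ∈ K.sym2 | ¬e.IsDiag}

theorem cliqueEdges_subset_sym2 (K : Finset V) : cliqueEdges K ⊆ K.sym2 :=
  filter_subset _ _

theorem mem_of_mem_cliqueEdges {e : Sym2 V} {u : V} (he : e ∈ cliqueEdges K) (hu : u ∈ e) :
    u ∈ K :=
  mem_sym2_iff.1 (cliqueEdges_subset_sym2 K he) u hu

theorem cliqueEdges_subset_edgeFinset {G : SimpleGraph V} [Fintype G.edgeSet] (hK : G.IsClique K) :
    cliqueEdges K ⊆ G.edgeFinset := by
  rintro ⟨u, v⟩ he
  obtain ⟨hmem, huv⟩ := mem_filter.1 he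
  obtain ⟨hu, hv⟩ := mk_mem_sym2_iff.1 hmem
  exact SimpleGraph.mem_edgeFinset.2 (hK hu hv huv)

theorem card_cliqueEdges (K : Finset V) : #(cliqueEdges K) = (#K).choose 2 := by
  rw [cliqueEdges, sym2_eq_image, Sym2.filter_image_mk_not_isDiag, Sym2.card_image_offDiag]

theorem vertexSum_cliqueEdges_of_notMem (f : Sym2 V → ℕ) {u : V} (hu : u ∉ K) :
    vertexSum (cliqueEdges K) f u = 0 := by
  rw [vertexSum, filter_false_of_mem fun e he hue => hu (mem_of_mem_cliqueEdges he hue), sum_empty]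

theorem cliqueEdges_image {r : V → W} (hr : Set.InjOn r K) :
    cliqueEdges (K.image r) = (cliqueEdges K).image (Sym2.map r) := by
  have hdiag : ∀ e ∈ K.sym2, (Sym2.map r e).IsDiag ↔ e.IsDiag := by
    rintro ⟨u, v⟩ he
    obtain ⟨hu, hv⟩ := mk_mem_sym2_iff.1 he
    exact hr.eq_iff hu hv
  rw [cliqueEdges, cliqueEdges, sym2_image, filter_image, filter_congr fun e he =>
    not_congr (hdiag e he)]

end CliqueEdges

section ArithProgression

/-- The `d`-step arithmetic progression `b, b + d, …` of length `n`. -/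
def arithProgression (b d n : ℕ) : Finset ℕ :=
  (range n).image fun i => b + d * i

theorem card_arithProgression (b d n : ℕ) [NeZero d] : #(arithProgression b d n) = n := by
  rw [arithProgression, card_image_of_injective, card_range]
  exact fun i j hij => Nat.eq_of_mul_eq_mul_left (NeZero.pos d) (Nat.add_left_cancel hij)

theorem arithProgression_subset_Ico {b d n N : ℕ} (h : b + d * n < N + d) :
    arithProgression b d n ⊆ Ico b N := by
  intro x hx
  obtain ⟨i, hi, rfl⟩ := mem_image.1 hx
  have hstep : d * i + d ≤ d * n := Nat.mul_succ d i ▸ Nat.mul_le_mul_left d (mem_range.1 hi)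
  rw [mem_Ico]
  omega

end ArithProgression

section Spokes

variable {V : Type*} {T : Finset V} {c : V → V}

theorem mem_spoke_iff (hc : ∀ v ∈ T, c v ∉ T) {u v : V} (hu : u ∈ T) (hv : v ∈ T) :
    u ∈ s(v, c v) ↔ u = v := by
  rw [Sym2.mem_iff, or_iff_left]
  rintro rfl
  exact hc v hv hu

theorem injOn_spoke (hc : ∀ v ∈ T, c v ∉ T) : Set.InjOn (fun v => s(v, c v)) T := by
  intro u hu v hv (huv : s(u, c u) = s(v, c v))
  exact (mem_spoke_iff hc hu hv).1 (huv ▸ Sym2.mem_mk_left u (c u))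

variable [DecidableEq V]

/-- The edges from each vertex `v ∈ T` to its chosen neighbour `c v`. -/
def spokes (T : Finset V) (c : V → V) : Finset (Sym2 V) :=
  T.image fun v => s(v, c v)

theorem spokes_subset_edgeFinset {G : SimpleGraph V} [Fintype G.edgeSet]
    (hc : ∀ v ∈ T, G.Adj v (c v)) : spokes T c ⊆ G.edgeFinset :=
  image_subset_iff.2 fun v hv => SimpleGraph.mem_edgeFinset.2 (hc v hv)

theorem disjoint_spokes_cliqueEdges {K : Finset V} (hTK : Disjoint T K) :
    Disjoint (spokes T c) (cliqueEdges K) := by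
  rw [disjoint_left]
  intro e he heK
  obtain ⟨v, hv, rfl⟩ := mem_image.1 he
  exact disjoint_left.1 hTK hv (mem_of_mem_cliqueEdges heK (Sym2.mem_mk_left v (c v)))

theorem card_spokes (hc : ∀ v ∈ T, c v ∉ T) : #(spokes T c) = #T :=
  card_image_of_injOn (injOn_spoke hc)

theorem vertexSum_spokes (hc : ∀ v ∈ T, c v ∉ T) (f : Sym2 V → ℕ) {u : V} (hu : u ∈ T) :
    vertexSum (spokes T c) f u = f s(u, c u) := by
  have hfilter : {v ∈ T | u ∈ s(v, c v)} = {u} := by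
    ext v
    rw [mem_filter, mem_singleton]
    constructor
    · rintro ⟨hv, huv⟩
      exact ((mem_spoke_iff hc hu hv).1 huv).symm
    · rintro rfl
      exact ⟨hu, Sym2.mem_mk_left v (c v)⟩
  rw [vertexSum, spokes, filter_image, hfilter, image_singleton, sum_singleton]

theorem exists_isLabelling_spokes (hc : ∀ v ∈ T, c v ∉ T) (w : V → ℕ) (b d : ℕ) [NeZero d] :
    ∃ h : Sym2 V → ℕ, IsLabelling h (spokes T c) (arithProgression b d #T) ∧
      IsSpaced d (fun u => vertexSum (spokes T c) h u + w u) T := by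
  obtain ⟨r, hr_inj, hr_image, hr_mono⟩ := exists_rank_of_finset T w
  let h : Sym2 V → ℕ :=
    Function.extend (fun v : T => s(v.1, c v)) (fun v : T => b + d * r v) 0
  have h_spoke : ∀ v ∈ T, h s(v, c v) = b + d * r v := fun v hv =>
    (injOn_spoke hc).injective.extend_apply (fun v : T => b + d * r v) 0 ⟨v, hv⟩
  refine ⟨h, ⟨?_, ?_⟩, fun u hu v hv huv => ?_⟩
  · rw [spokes, coe_image]
    rintro _ ⟨u, hu, rfl⟩ _ ⟨v, hv, rfl⟩ huv
    rw [h_spoke u hu, h_spoke v hv, Nat.add_left_cancel_iff,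
      Nat.mul_right_inj (NeZero.ne d)] at huv
    rw [hr_inj hu hv huv]
  · rw [spokes, coe_image]
    rintro _ ⟨v, hv, rfl⟩
    rw [h_spoke v hv, arithProgression, ← hr_image]
    exact mem_image_of_mem _ (mem_image_of_mem r hv)
  · have hstep : ∀ {i j : ℕ}, i < j → d * i + d ≤ d * j := fun {i j} hij =>
      Nat.mul_succ d i ▸ Nat.mul_le_mul_left d hij
    simp only [vertexSum_spokes hc h hu, vertexSum_spokes hc h hv, h_spoke u hu, h_spoke v hv]
    rcases lt_or_gt_of_ne fun hrr => huv (hr_inj hu hv hrr) with hlt | hlt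
    · have := hr_mono u hu v hv hlt
      have := hstep hlt
      omega
    · have := hr_mono v hv u hu hlt
      have := hstep hlt
      omega

end Spokes

section Tetrahedron

/-- The labelling of the edges of the complete graph on `{0, 1, 2, 3}` by six given labels,
listed in lexicographic order of the edges. -/
def tetrahedronLabelling (l₀₁ l₀₂ l₀₃ l₁₂ l₁₃ l₂₃ : ℕ) (e : Sym2 ℕ) : ℕ :=
  if e = s(0, 1) then l₀₁ else if e = s(0, 2) then l₀₂ else if e = s(0, 3) then l₀₃
  else if e = s(1, 2) then l₁₂ else if e = s(1, 3) then l₁₃ else l₂₃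

/-- Labellings of the complete graph on `{0, 1, 2, 3}` with vertex sums `7 + x`, `12 + y`, `16 + x`
and `19 + y`. The first line shifts the labels of the opposite edges `02` and `13`; the other two
have the same sums and serve for `x = 2`, where the shifted label `4` of `02` is already taken. -/
def shiftedLabelling (x y : Fin 3) : Sym2 ℕ → ℕ :=
  if x ≠ 2 then tetrahedronLabelling 1 (2 + x) 4 5 (6 + y) 9
  else if y ≠ 2 then tetrahedronLabelling 1 2 6 7 (4 + y) 9
  else tetrahedronLabelling 1 3 5 6 7 9

theorem isLabelling_shiftedLabelling (x y : Fin 3) :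
    IsLabelling (shiftedLabelling x y) (cliqueEdges (range 4)) (Icc 1 9) := by
  constructor
  · rw [← card_image_iff]
    revert x y
    decide
  · change ∀ e ∈ cliqueEdges (range 4), _
    revert x y
    decide

/-- The least vertex sum at the vertex `i < 4` of the labellings `shiftedLabelling x y`. -/
def minShiftedSum (i : ℕ) : ℕ :=
  ![7, 12, 16, 19] (Fin.ofNat 4 i)

theorem minShiftedSum_add_three_le : ∀ j < 4, ∀ i < j, minShiftedSum i + 3 ≤ minShiftedSum j := by
  decide

theorem vertexSum_shiftedLabelling (x y : Fin 3) :
    ∀ i < 4, vertexSum (cliqueEdges (range 4)) (shiftedLabelling x y) i =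
      minShiftedSum i + if Even i then x else y := by
  revert x y
  decide

theorem exists_isLabelling_range_four (c : ℕ → Fin 3) :
    ∃ f : Sym2 ℕ → ℕ, IsLabelling f (cliqueEdges (range 4)) (Icc 1 9) ∧
      ∀ i < 4, ∃ j ≠ c i, vertexSum (cliqueEdges (range 4)) f i = minShiftedSum i + j := by
  have havoid : ∀ a b : Fin 3, ∃ x, x ≠ a ∧ x ≠ b := by decide
  obtain ⟨x, hx₀, hx₂⟩ := havoid (c 0) (c 2)
  obtain ⟨y, hy₁, hy₃⟩ := havoid (c 1) (c 3)
  refine ⟨shiftedLabelling x y, isLabelling_shiftedLabelling x y, fun i hi =>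
    ⟨if Even i then x else y, ?_, vertexSum_shiftedLabelling x y i hi⟩⟩
  interval_cases i <;> simpa

end Tetrahedron

section DominatingClique

variable {V : Type*} [DecidableEq V] {K T : Finset V} {E : Finset (Sym2 V)} {f : Sym2 V → ℕ}

theorem exists_isLabelling_cliqueEdges_of_rank {r : V → ℕ} (hr : Set.InjOn r K)
    (himage : K.image r = range 4) (c : V → Fin 3) :
    ∃ k : Sym2 V → ℕ, IsLabelling k (cliqueEdges K) (Icc 1 9) ∧
      ∀ u ∈ K, ∃ j ≠ c u, vertexSum (cliqueEdges K) k u = minShiftedSum (r u) + j := by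
  have hindexed : ∀ i < 4, ∃ j : Fin 3, ∀ u ∈ K, r u = i → c u = j := by
    intro i hi
    obtain ⟨u, hu, rfl⟩ := mem_image.1 (himage ▸ mem_range.2 hi)
    exact ⟨c u, fun v hv hvu => congrArg c (hr hv hu hvu)⟩
  choose! c' hc' using hindexed
  obtain ⟨l, hl, hl_sum⟩ := exists_isLabelling_range_four c'
  rw [← himage, cliqueEdges_image hr] at hl hl_sum
  refine ⟨l ∘ Sym2.map r,
    hl.comp_of_image ((injOn_sym2_map hr).mono (cliqueEdges_subset_sym2 K)), fun u hu => ?_⟩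
  have hru : r u < 4 := mem_range.1 (himage ▸ mem_image_of_mem r hu)
  rw [← vertexSum_image_map hr l (cliqueEdges_subset_sym2 K) hu, hc' (r u) hru u hu rfl]
  exact hl_sum (r u) hru

theorem exists_isLabelling_cliqueEdges (hK : #K = 4) (p : V → ℕ) {σ : V → ℕ}
    (hσ : IsSpaced 3 σ T) :
    ∃ k : Sym2 V → ℕ, IsLabelling k (cliqueEdges K) (Icc 1 9) ∧
      Set.InjOn (fun u => vertexSum (cliqueEdges K) k u + p u) K ∧
      ∀ u ∈ K, ∀ v ∈ T, vertexSum (cliqueEdges K) k u + p u ≠ σ v := by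
  obtain ⟨r, hr_inj, hr_image, hr_mono⟩ := exists_rank_of_finset K p
  rw [hK] at hr_image
  choose c hc using fun u => hσ.exists_fin_forall_ne_add (minShiftedSum (r u) + p u)
  obtain ⟨k, hk, hsum⟩ := exists_isLabelling_cliqueEdges_of_rank hr_inj hr_image c
  have hlt : ∀ u ∈ K, ∀ v ∈ K, r u < r v →
      vertexSum (cliqueEdges K) k u + p u < vertexSum (cliqueEdges K) k v + p v := by
    intro u hu v hv huv
    obtain ⟨i, -, hi⟩ := hsum u hu
    obtain ⟨j, -, hj⟩ := hsum v hv
    have hp := hr_mono u hu v hv huv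
    have hrv : r v < 4 := mem_range.1 (hr_image ▸ mem_image_of_mem r hv)
    have hgap := minShiftedSum_add_three_le (r v) hrv (r u) huv
    omega
  refine ⟨k, hk, fun u hu v hv huv => ?_, fun u hu v hv huv => ?_⟩
  · by_contra hne
    rcases lt_or_gt_of_ne fun hrr => hne (hr_inj hu hv hrr) with h | h
    · exact (hlt u hu v hv h).ne huv
    · exact (hlt v hv u hu h).ne' huv
  · obtain ⟨j, hj_ne, hj⟩ := hsum u hu
    exact hc u j hj_ne v hv (by omega)

theorem exists_isLabelling_isSpaced_of_spokes_subset {c : V → V} (hc : ∀ v ∈ T, c v ∉ T)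
    (hE : spokes T c ⊆ E) (b d : ℕ) [NeZero d] (hcard : d * #T < #E + d) :
    ∃ f : Sym2 V → ℕ, IsLabelling f E (Ico b (b + #E)) ∧ IsSpaced d (vertexSum E f) T := by
  have hsub : arithProgression b d #T ⊆ Ico b (b + #E) := arithProgression_subset_Ico (by omega)
  obtain ⟨g, hg⟩ : ∃ g, IsLabelling g (E \ spokes T c)
      (Ico b (b + #E) \ arithProgression b d #T) := by
    apply exists_isLabelling_of_card_le
    rw [card_sdiff_of_subset hsub, card_sdiff_of_subset hE, card_spokes hc,
      card_arithProgression, Nat.card_Ico, Nat.add_sub_cancel_left]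
  obtain ⟨h, hh, hspaced⟩ := exists_isLabelling_spokes hc (vertexSum (E \ spokes T c) g) b d
  have hf := hh.piecewise_of_subset hg hE disjoint_sdiff
  rw [union_sdiff_of_subset hsub] at hf
  exact ⟨_, hf, funext (vertexSum_piecewise_of_subset hE) ▸ hspaced⟩

theorem exists_isLabelling_injective_vertexSum [Fintype V] {N : ℕ} (hK : #K = 4)
    (hE : cliqueEdges K ⊆ E) (hf : IsLabelling f (E \ cliqueEdges K) (Ico 10 N)) (hN : 10 ≤ N)
    (hspaced : IsSpaced 3 (vertexSum (E \ cliqueEdges K) f) Kᶜ) :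
    ∃ f' : Sym2 V → ℕ, IsLabelling f' E (Ico 1 N) ∧ Function.Injective (vertexSum E f') := by
  obtain ⟨k, hk, hk_inj, hk_ne⟩ :=
    exists_isLabelling_cliqueEdges hK (vertexSum (E \ cliqueEdges K) f) hspaced
  have hlabels : Disjoint (Icc 1 9) (Ico 10 N) := by
    rw [disjoint_left]
    simp only [mem_Icc, mem_Ico]
    omega
  have hsum := vertexSum_piecewise_of_subset (f := k) (g := f) hE
  have hsum_compl : ∀ v ∉ K, vertexSum E ((cliqueEdges K).piecewise k f) v =
      vertexSum (E \ cliqueEdges K) f v := fun v hv => by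
    rw [hsum, vertexSum_cliqueEdges_of_notMem k hv, zero_add]
  refine ⟨_, (hk.piecewise_of_subset hf hE hlabels).mono fun x => ?_, ?_⟩
  · simp only [mem_union, mem_Icc, mem_Ico]
    omega
  · rw [← Set.injOn_univ, ← Set.union_compl_self (K : Set V), Set.injOn_union disjoint_compl_right,
      ← coe_compl]
    refine ⟨hk_inj.congr fun u _ => (hsum u).symm,
      hspaced.injOn.congr fun v hv => (hsum_compl v (mem_compl.1 hv)).symm, fun u hu v hv => ?_⟩
    rw [hsum u, hsum_compl v (mem_compl.1 hv)]
    exact hk_ne u hu v hv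

end DominatingClique

/-- If a graph `G` with `n` vertices and `m` edges has a dominating clique of order `4`
and `m ≥ 3(n - 4) + 4`, then `G` is `3`-antimagic. -/
theorem three_antimagic_of_dominating_K4 {V : Type*} [Fintype V] [DecidableEq V]
    (G : SimpleGraph V) [DecidableRel G.Adj] (K : Finset V)
    (hclique : G.IsClique ↑K) (hcard : K.card = 4)
    (hdom : ∀ v ∉ K, ∃ u ∈ K, G.Adj v u)
    (hm : 3 * ((Fintype.card V : ℤ) - 4) + 4 ≤ (G.edgeFinset.card : ℤ)) :
    IsCAntimagic G 3 := by
  choose! c hcK hcAdj using hdom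
  have hclique_edges := cliqueEdges_subset_edgeFinset hclique
  have hspokes : spokes Kᶜ c ⊆ G.edgeFinset \ cliqueEdges K :=
    subset_sdiff.2 ⟨spokes_subset_edgeFinset fun v hv => hcAdj v (mem_compl.1 hv),
      disjoint_spokes_cliqueEdges disjoint_compl_left⟩
  have hcard_rest : #(G.edgeFinset \ cliqueEdges K) + 6 = #G.edgeFinset := by
    rw [← card_sdiff_add_card_eq_card hclique_edges, card_cliqueEdges, hcard]
    rfl
  have hcard_compl : #Kᶜ + 4 = Fintype.card V := hcard ▸ card_compl_add_card K
  obtain ⟨g, hg, hspaced⟩ := exists_isLabelling_isSpaced_of_spokes_subset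
    (fun v hv => notMem_compl.2 (hcK v (mem_compl.1 hv))) hspokes 10 3 (by omega)
  obtain ⟨f, hf, hinj⟩ := exists_isLabelling_injective_vertexSum hcard hclique_edges hg
    (Nat.le_add_right _ _) hspaced
  refine ⟨f, hf.injOn, fun e he => ?_, ?_⟩
  · have := mem_Ico.1 (hf.mapsTo he)
    rw [mem_Icc]
    omega
  · simpa only [sum_neighborFinset_eq_vertexSum] using hinj
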